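/- Let N be a symmetric positive-definite 2×2 real matrix with eigenvalues 0 < λ_1 ≤ λ_2, and let U, V be independent standard Gaussian random vectors on ℝ². Then the law of U·NV has density f(s) = (θ/2π) ∫_0^π √((1−ε²)/(1+ε cos φ)) e^{−θ|s|√(1+ε cos φ)} dφ, where ε = (λ_2² − λ_1²)/(λ_2² + λ_1²) and θ = (½(λ_1^{−2} + λ_2^{−2}))^{1/2}. -/

import Mathlib

open MeasureTheory ProbabilityTheory Matrix Real
open scoped ENNReal

/-- The standard Gaussian measure on `ι → ℝ`: the centered Gaussian measure with identity
covariance, i.e. the product of copies of `N(0,1)`. -/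
noncomputable def stdGaussian (ι : Type*) [Fintype ι] : Measure (ι → ℝ) :=
  Measure.pi fun _ => gaussianReal 0 1

lemma aux_poisson (a b : ℝ) (h : |b| < a) :
    ∫ φ in (0:ℝ)..π, 1 / (a + b * Real.cos φ) = π / √(a ^ 2 - b ^ 2) := by
  have ha : 0 < a := lt_of_le_of_lt (abs_nonneg b) h
  have hb := abs_lt.mp h
  have hD : 0 < a ^ 2 - b ^ 2 := by nlinarith
  set s := √(a ^ 2 - b ^ 2) with hs
  have hs0 : 0 < s := Real.sqrt_pos.mpr hD
  have hs2 : s ^ 2 = a ^ 2 - b ^ 2 := Real.sq_sqrt hD.le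
  have key : ∀ (K : ℝ), |b| < K → ∀ φ : ℝ, 0 < K + b * Real.cos φ := by
    intro K hK φ
    have h1 : |b * Real.cos φ| ≤ |b| := by
      rw [abs_mul]; exact mul_le_of_le_one_right (abs_nonneg _) (Real.abs_cos_le_one φ)
    have := neg_abs_le (b * Real.cos φ)
    linarith
  have hder : ∀ φ : ℝ, HasDerivAt
      (fun φ => (φ - 2 * Real.arctan (b * Real.sin φ / ((a + s) + b * Real.cos φ))) / s)
      (1 / (a + b * Real.cos φ)) φ := by
    intro φ
    have p1 := key a h φ
    have p2 := key (a + s) (by linarith) φ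
    have d1 : HasDerivAt (fun φ => b * Real.sin φ) (b * Real.cos φ) φ :=
      (Real.hasDerivAt_sin φ).const_mul b
    have d2 : HasDerivAt (fun φ => (a + s) + b * Real.cos φ) (b * (-Real.sin φ)) φ :=
      ((Real.hasDerivAt_cos φ).const_mul b).const_add (a + s)
    have d3 := (((hasDerivAt_id φ).sub (((d1.div d2 p2.ne').arctan).const_mul 2)).div_const s)
    refine HasDerivAt.congr_deriv (f' := _) d3 ?_
    have q : Real.sin φ ^ 2 = 1 - Real.cos φ ^ 2 := Real.sin_sq φ
    have hden : 0 < (a + s + b * Real.cos φ) ^ 2 + (b * Real.sin φ) ^ 2 := by positivity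
    have e1 : (a + s + b * Real.cos φ) ^ 2 + (b * Real.sin φ) ^ 2
        = 2 * (a + s) * (a + b * Real.cos φ) := by
      rw [mul_pow b, q]; linear_combination hs2
    have e2 : 1 / (1 + (b * Real.sin φ / (a + s + b * Real.cos φ)) ^ 2) *
        ((b * Real.cos φ * (a + s + b * Real.cos φ) - b * Real.sin φ * (b * -Real.sin φ)) /
        (a + s + b * Real.cos φ) ^ 2) = (b * Real.cos φ + a - s) / (2 * (a + b * Real.cos φ)) := by
      have : 1 + (b * Real.sin φ / (a + s + b * Real.cos φ)) ^ 2
        = 2 * (a + s) * (a + b * Real.cos φ) / (a + s + b * Real.cos φ) ^ 2 := by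
        rw [← e1]; field_simp
      rw [this]
      have : b * Real.cos φ * (a + s + b * Real.cos φ) - b * Real.sin φ * (b * -Real.sin φ)
        = (a + s) * (b * Real.cos φ + a - s) := by
        linear_combination b ^ 2 * q + hs2
      rw [this]
      have : 0 < a + s := by positivity
      field_simp
    simp only [Pi.div_apply]
    rw [e2]
    field_simp
    ring
  rw [intervalIntegral.integral_eq_sub_of_hasDerivAt (fun φ _ => hder φ)]
  · simp
  · apply Continuous.intervalIntegrable
    exact continuous_const.div (by fun_prop) (fun φ => (key a h φ).ne')

lemma aux_exp_abs_int (c : ℝ) (hc : 0 < c) : Integrable (fun s : ℝ => Real.exp (-c * |s|)) := by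
  rw [← integrableOn_univ, ← Set.Iic_union_Ioi (a := (0:ℝ))]
  refine IntegrableOn.union ?_ ?_
  · refine (integrableOn_exp_mul_Iic hc 0).congr_fun (fun x hx => ?_) measurableSet_Iic
    simp only [abs_of_nonpos (Set.mem_Iic.mp hx)]; ring_nf
  · refine (integrableOn_exp_mul_Ioi (a := -c) (by linarith) 0).congr_fun
      (fun x hx => ?_) measurableSet_Ioi
    simp only [abs_of_pos (Set.mem_Ioi.mp hx)]

lemma aux_laplace (c t : ℝ) (hc : 0 < c) :
    ∫ s : ℝ, (Real.exp (-c * |s|) : ℂ) * Complex.exp (t * s * Complex.I)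
      = ((2 * c / (c ^ 2 + t ^ 2) : ℝ) : ℂ) := by
  have hint : Integrable (fun s : ℝ =>
      (Real.exp (-c * |s|) : ℂ) * Complex.exp (t * s * Complex.I)) := by
    refine (aux_exp_abs_int c hc).mono' (by fun_prop) (ae_of_all _ fun s => ?_)
    rw [norm_mul, Complex.norm_real, ← Complex.ofReal_mul, Complex.norm_exp_ofReal_mul_I]
    simp
  rw [← intervalIntegral.integral_Iic_add_Ioi (b := (0:ℝ)) hint.integrableOn hint.integrableOn]
  have e1 : ∫ s in Set.Iic (0:ℝ), (Real.exp (-c * |s|) : ℂ) * Complex.exp (t * s * Complex.I)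
      = 1 / (c + t * Complex.I) := by
    rw [setIntegral_congr_fun (g := fun s : ℝ => Complex.exp ((c + t * Complex.I) * s))
      measurableSet_Iic]
    · rw [integral_exp_mul_complex_Iic (by simpa using hc)]; simp
    · intro s hs
      simp only [abs_of_nonpos (Set.mem_Iic.mp hs)]
      push_cast
      rw [← Complex.exp_add]; congr 1; ring
  have e2 : ∫ s in Set.Ioi (0:ℝ), (Real.exp (-c * |s|) : ℂ) * Complex.exp (t * s * Complex.I)
      = 1 / (c - t * Complex.I) := by
    rw [setIntegral_congr_fun (g := fun s : ℝ => Complex.exp ((-c + t * Complex.I) * s))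
      measurableSet_Ioi]
    · rw [integral_exp_mul_complex_Ioi (by simpa using hc)]
      rw [show (-(c:ℂ) + t * Complex.I) = -(c - t * Complex.I) by ring]
      simp [← neg_div_neg_eq (1:ℂ)]
    · intro s hs
      simp only [abs_of_pos (Set.mem_Ioi.mp hs)]
      push_cast
      rw [← Complex.exp_add]; congr 1; ring
  rw [e1, e2]
  have n1 : (c + t * Complex.I : ℂ) ≠ 0 := by
    intro h; have := congrArg Complex.re h; simp at this; linarith
  have n2 : (c - t * Complex.I : ℂ) ≠ 0 := by
    intro h; have := congrArg Complex.re h; simp at this; linarith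
  have n3 : ((c:ℂ) ^ 2 + t ^ 2) = (c + t * Complex.I) * (c - t * Complex.I) := by
    ring_nf; simp
  push_cast
  rw [n3]
  field_simp
  ring

lemma aux_gauss (r m : ℝ) (hr : 0 < 1 + r) :
    ∫ y, Real.exp (-(r * y ^ 2) / 2 + m * y) ∂(gaussianReal 0 1)
      = 1 / √(1 + r) * Real.exp (m ^ 2 / (2 * (1 + r))) := by
  rw [integral_gaussianReal_eq_integral_smul one_ne_zero]
  have : ∀ y : ℝ, gaussianPDFReal 0 1 y • Real.exp (-(r * y ^ 2) / 2 + m * y)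
     = ((√(2 * π))⁻¹ * Real.exp (m ^ 2 / (2 * (1 + r)))) *
        (fun y => Real.exp (-((1 + r) / 2) * y ^ 2)) (y - m / (1 + r)) := by
    intro y
    simp only [gaussianPDFReal, smul_eq_mul, NNReal.coe_one, mul_one]
    rw [mul_assoc, mul_assoc, ← Real.exp_add, ← Real.exp_add]
    congr 2
    field_simp
    ring
  simp_rw [this]
  rw [integral_const_mul, integral_sub_right_eq_self (fun y => Real.exp (-((1 + r) / 2) * y ^ 2)),
    integral_gaussian]
  have : √(π / ((1 + r) / 2)) = √(2 * π) / √(1 + r) := by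
    rw [← Real.sqrt_div (by positivity)]; congr 1; field_simp
  rw [this]
  have : √(2 * π) ≠ 0 := by positivity
  field_simp

lemma aux_pos (ε : ℝ) (h0 : 0 ≤ ε) (φ : ℝ) : 1 - ε ≤ 1 + ε * Real.cos φ := by
  nlinarith [Real.neg_one_le_cos φ]

lemma aux_int (θ ε : ℝ) (hθ : 0 < θ) (h0 : 0 ≤ ε) (h1 : ε < 1) :
    Integrable (fun p : ℝ × ℝ => Real.sqrt ((1 - ε ^ 2) / (1 + ε * Real.cos p.2)) *
            Real.exp (-θ * |p.1| * Real.sqrt (1 + ε * Real.cos p.2)))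
      ((volume : Measure ℝ).prod (volume.restrict (Set.Ioc 0 π))) := by
  have hk : 0 < θ * √(1 - ε) := mul_pos hθ (Real.sqrt_pos.mpr (by linarith))
  have hi := (aux_exp_abs_int _ hk).mul_prod (ν := (volume.restrict (Set.Ioc 0 π)))
    (integrable_const (√((1 - ε ^ 2) / (1 - ε))))
  refine hi.mono' (Measurable.aestronglyMeasurable (by fun_prop)) (ae_of_all _ fun p => ?_)
  rw [norm_of_nonneg (by positivity), mul_comm]
  have hp := aux_pos ε h0 p.2
  have : 0 < 1 - ε := by linarith
  have : 0 ≤ 1 - ε ^ 2 := by nlinarith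
  gcongr ?_ * ?_
  · apply Real.exp_le_exp.mpr
    have := mul_le_mul_of_nonneg_left (Real.sqrt_le_sqrt hp)
      (mul_nonneg hθ.le (abs_nonneg p.1))
    linarith
  · gcongr

lemma aux_rhs (θ ε t : ℝ) (hθ : 0 < θ) (h0 : 0 ≤ ε) (h1 : ε < 1) :
    ∫ s : ℝ, (((θ / (2 * π)) * ∫ φ in (0 : ℝ)..π,
          Real.sqrt ((1 - ε ^ 2) / (1 + ε * Real.cos φ)) *
            Real.exp (-θ * |s| * Real.sqrt (1 + ε * Real.cos φ)) : ℝ) : ℂ) *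
          Complex.exp (t * s * Complex.I)
      = ((θ ^ 2 * √(1 - ε ^ 2) / √((θ ^ 2 + t ^ 2) ^ 2 - (θ ^ 2 * ε) ^ 2) : ℝ) : ℂ) := by
  have hI := aux_int θ ε hθ h0 h1
  have hJ : Integrable (Function.uncurry (fun (s φ : ℝ) =>
      ((Real.sqrt ((1 - ε ^ 2) / (1 + ε * Real.cos φ)) *
            Real.exp (-θ * |s| * Real.sqrt (1 + ε * Real.cos φ)) : ℝ) : ℂ) *
          Complex.exp (t * s * Complex.I)))
      ((volume : Measure ℝ).prod (volume.restrict (Set.Ioc 0 π))) := by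
    refine hI.mono (Measurable.aestronglyMeasurable (by unfold Function.uncurry; fun_prop))
      (ae_of_all _ fun p => ?_)
    simp only [Function.uncurry]
    rw [norm_mul, Complex.norm_real, ← Complex.ofReal_mul, Complex.norm_exp_ofReal_mul_I, mul_one]
  have e1 : ∀ s : ℝ, (((θ / (2 * π)) * ∫ φ in (0 : ℝ)..π,
          Real.sqrt ((1 - ε ^ 2) / (1 + ε * Real.cos φ)) *
            Real.exp (-θ * |s| * Real.sqrt (1 + ε * Real.cos φ)) : ℝ) : ℂ) *
          Complex.exp (t * s * Complex.I) = (θ / (2 * π) : ℝ) *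
        ∫ φ in Set.Ioc 0 π, ((Real.sqrt ((1 - ε ^ 2) / (1 + ε * Real.cos φ)) *
            Real.exp (-θ * |s| * Real.sqrt (1 + ε * Real.cos φ)) : ℝ) : ℂ) *
          Complex.exp (t * s * Complex.I) := by
    intro s
    rw [integral_mul_const, integral_complex_ofReal,
      intervalIntegral.integral_of_le Real.pi_pos.le, Complex.ofReal_mul, mul_assoc]
  simp_rw [e1]
  rw [integral_const_mul, integral_integral_swap hJ]
  have hε : 0 ≤ 1 - ε ^ 2 := by nlinarith
  have e2 : ∀ φ : ℝ, ∫ s : ℝ, ((Real.sqrt ((1 - ε ^ 2) / (1 + ε * Real.cos φ)) *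
            Real.exp (-θ * |s| * Real.sqrt (1 + ε * Real.cos φ)) : ℝ) : ℂ) *
          Complex.exp (t * s * Complex.I)
      = ((2 * θ * √(1 - ε ^ 2) * (1 / ((θ ^ 2 + t ^ 2) + (θ ^ 2 * ε) * Real.cos φ)) : ℝ) : ℂ) := by
    intro φ
    have hp : 0 < 1 + ε * Real.cos φ := by linarith [aux_pos ε h0 φ]
    have hr : 0 < √(1 + ε * Real.cos φ) := Real.sqrt_pos.mpr hp
    have hr2 : √(1 + ε * Real.cos φ) ^ 2 = 1 + ε * Real.cos φ := Real.sq_sqrt hp.le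
    have := aux_laplace (θ * √(1 + ε * Real.cos φ)) t (by positivity)
    simp_rw [Complex.ofReal_mul, mul_assoc]
    rw [integral_const_mul]
    have e3 : ∀ s : ℝ, -θ * (|s| * √(1 + ε * Real.cos φ)) = -(θ * √(1 + ε * Real.cos φ)) * |s| := by
      intro s; ring
    simp_rw [e3]
    simp_rw [mul_assoc] at this ⊢
    rw [this, ← Complex.ofReal_mul, ← Complex.ofReal_mul]
    norm_cast
    rw [Real.sqrt_div hε, mul_pow, hr2]
    have : 0 < θ ^ 2 + t ^ 2 + θ ^ 2 * (ε * Real.cos φ) := by nlinarith [sq_nonneg t, mul_pos (pow_pos hθ 2) hp]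
    have h5 : θ ^ 2 * (1 + ε * Real.cos φ) + t ^ 2 = θ ^ 2 + t ^ 2 + θ ^ 2 * (ε * Real.cos φ) := by ring
    rw [h5]
    field_simp
  simp_rw [e2]
  rw [integral_complex_ofReal, integral_const_mul, ← intervalIntegral.integral_of_le Real.pi_pos.le,
    aux_poisson]
  · norm_cast
    have := Real.pi_pos
    field_simp
  · rw [abs_of_nonneg (by positivity)]
    nlinarith [sq_nonneg t, mul_pos (pow_pos hθ 2) (sub_pos.mpr h1)]

lemma aux_rhs_int (θ ε : ℝ) (hθ : 0 < θ) (h0 : 0 ≤ ε) (h1 : ε < 1) :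
    Integrable (fun s : ℝ => (θ / (2 * π)) * ∫ φ in (0 : ℝ)..π,
          Real.sqrt ((1 - ε ^ 2) / (1 + ε * Real.cos φ)) *
            Real.exp (-θ * |s| * Real.sqrt (1 + ε * Real.cos φ))) := by
  have := ((aux_int θ ε hθ h0 h1).integral_prod_left).const_mul (θ / (2 * π))
  simp_rw [intervalIntegral.integral_of_le Real.pi_pos.le]
  exact this

lemma aux_charFun_rhs (θ ε t : ℝ) (hθ : 0 < θ) (h0 : 0 ≤ ε) (h1 : ε < 1) :
    charFun ((volume : Measure ℝ).withDensity (fun s => ENNReal.ofReal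
        ((θ / (2 * π)) * ∫ φ in (0 : ℝ)..π,
          Real.sqrt ((1 - ε ^ 2) / (1 + ε * Real.cos φ)) *
            Real.exp (-θ * |s| * Real.sqrt (1 + ε * Real.cos φ))))) t
      = ((θ ^ 2 * √(1 - ε ^ 2) / √((θ ^ 2 + t ^ 2) ^ 2 - (θ ^ 2 * ε) ^ 2) : ℝ) : ℂ) := by
  rw [charFun_apply_real, integral_withDensity_eq_integral_toReal_smul₀
    (aux_rhs_int θ ε hθ h0 h1).1.aemeasurable.ennreal_ofReal (ae_of_all _ fun _ => ENNReal.ofReal_lt_top),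
    ← aux_rhs θ ε t hθ h0 h1]
  congr 1
  ext s
  rw [ENNReal.toReal_ofReal, Complex.real_smul]
  apply mul_nonneg (by positivity)
  apply intervalIntegral.integral_nonneg Real.pi_pos.le
  intro φ _
  positivity


instance aux_prob : IsProbabilityMeasure (stdGaussian (Fin 2)) := by
  unfold _root_.stdGaussian; infer_instance

lemma aux_std_char (t : ℝ) (w : Fin 2 → ℝ) :
    ∫ u, Complex.exp (t * (u ⬝ᵥ w : ℝ) * Complex.I) ∂(stdGaussian (Fin 2))
      = ((Real.exp (-(t ^ 2 * (w 0 ^ 2 + w 1 ^ 2)) / 2) : ℝ) : ℂ) := by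
  have h := integral_fin_nat_prod_eq_prod (n := 2) (μ := fun _ => gaussianReal 0 1)
    (fun i (x : ℝ) => Complex.exp ((t * w i : ℝ) * x * Complex.I))
  simp_rw [← charFun_apply_real, charFun_gaussianReal, Fin.prod_univ_two, ← Complex.exp_add] at h
  unfold _root_.stdGaussian
  convert h using 1
  · congr 1; ext u; congr 1; simp [dotProduct, Fin.sum_univ_two]; ring
  · rw [Complex.ofReal_exp]; congr 1; push_cast; ring

lemma aux_std_quad (t : ℝ) (N : Matrix (Fin 2) (Fin 2) ℝ) :
    ∫ v, Real.exp (-(t ^ 2 * ((N *ᵥ v) 0 ^ 2 + (N *ᵥ v) 1 ^ 2)) / 2) ∂(stdGaussian (Fin 2))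
      = 1 / √(1 + t ^ 2 * (N 0 0 ^ 2 + N 0 1 ^ 2 + N 1 0 ^ 2 + N 1 1 ^ 2) + t ^ 4 * N.det ^ 2) := by
  set p := t ^ 2 * (N 0 0 ^ 2 + N 1 0 ^ 2) with hp
  set q := t ^ 2 * (N 0 0 * N 0 1 + N 1 0 * N 1 1) with hq
  set r := t ^ 2 * (N 0 1 ^ 2 + N 1 1 ^ 2) with hr
  have hp0 : 0 ≤ p := by positivity
  have hr0 : 0 ≤ r := by positivity
  have hdet : p * r - q ^ 2 = t ^ 4 * N.det ^ 2 := by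
    rw [Matrix.det_fin_two, hp, hq, hr]; ring
  have hdet0 : 0 ≤ p * r - q ^ 2 := by rw [hdet]; positivity
  have e1 := (measurePreserving_finTwoArrow (gaussianReal 0 1)).symm.integral_comp'
    (g := fun v : Fin 2 → ℝ => Real.exp (-(t ^ 2 * ((N *ᵥ v) 0 ^ 2 + (N *ᵥ v) 1 ^ 2)) / 2))
  unfold _root_.stdGaussian
  rw [← e1]
  have e2 : ∀ x : ℝ × ℝ, Real.exp (-(t ^ 2 * ((N *ᵥ (MeasurableEquiv.finTwoArrow.symm x)) 0 ^ 2 +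
      (N *ᵥ (MeasurableEquiv.finTwoArrow.symm x)) 1 ^ 2)) / 2)
      = Real.exp (-(p * x.1 ^ 2) / 2) * Real.exp (-(r * x.2 ^ 2) / 2 + (-q * x.1) * x.2) := by
    intro x
    rw [← Real.exp_add]; congr 1
    have h0 : (MeasurableEquiv.finTwoArrow.symm x : Fin 2 → ℝ) 0 = x.1 := rfl
    have h1 : (MeasurableEquiv.finTwoArrow.symm x : Fin 2 → ℝ) 1 = x.2 := rfl
    simp only [Matrix.mulVec, dotProduct, Fin.sum_univ_two, h0, h1]
    rw [hp, hq, hr]; ring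
  have e3 : Integrable (fun x : ℝ × ℝ => Real.exp (-(t ^ 2 * ((N *ᵥ (MeasurableEquiv.finTwoArrow.symm x)) 0 ^ 2 +
      (N *ᵥ (MeasurableEquiv.finTwoArrow.symm x)) 1 ^ 2)) / 2)) ((gaussianReal 0 1).prod (gaussianReal 0 1)) := by
    refine (integrable_const (1:ℝ)).mono' ?_ (ae_of_all _ fun x => ?_)
    · simp_rw [e2]
      exact Measurable.aestronglyMeasurable (by fun_prop)
    · rw [norm_of_nonneg (Real.exp_nonneg _), Real.exp_le_one_iff]
      have : 0 ≤ t ^ 2 * ((N *ᵥ (MeasurableEquiv.finTwoArrow.symm x)) 0 ^ 2 +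
        (N *ᵥ (MeasurableEquiv.finTwoArrow.symm x)) 1 ^ 2) := by positivity
      linarith
  rw [integral_prod _ e3]
  simp_rw [e2, integral_const_mul, aux_gauss r _ (by linarith : 0 < 1 + r)]
  have e4 : ∀ x : ℝ, Real.exp (-(p * x ^ 2) / 2) * (1 / √(1 + r) * Real.exp ((-q * x) ^ 2 / (2 * (1 + r))))
    = 1 / √(1 + r) * Real.exp (-((p - q ^ 2 / (1 + r)) * x ^ 2) / 2 + 0 * x) := by
    intro x
    rw [mul_left_comm, ← Real.exp_add]; congr 2
    field_simp
    ring
  have hm : 1 + (p - q ^ 2 / (1 + r)) = (1 + p + r + (p * r - q ^ 2)) / (1 + r) := by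
    field_simp; ring
  simp_rw [e4]
  rw [integral_const_mul, aux_gauss _ _ (by rw [hm]; positivity), hm, hdet]
  have hX : 1 + t ^ 2 * (N 0 0 ^ 2 + N 0 1 ^ 2 + N 1 0 ^ 2 + N 1 1 ^ 2) + t ^ 4 * N.det ^ 2
     = 1 + p + r + t ^ 4 * N.det ^ 2 := by rw [hp, hr]; ring
  rw [hX, Real.sqrt_div (by positivity)]
  have : √(1 + r) ≠ 0 := by positivity
  simp
  field_simp

lemma aux_charFun_lhs {Ω : Type*} [MeasurableSpace Ω] (P : Measure Ω) [IsProbabilityMeasure P]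
    (N : Matrix (Fin 2) (Fin 2) ℝ)
    (U V : Ω → (Fin 2 → ℝ)) (hU : Measurable U) (hV : Measurable V)
    (hUlaw : P.map U = stdGaussian (Fin 2)) (hVlaw : P.map V = stdGaussian (Fin 2))
    (hUV : IndepFun U V P) (t : ℝ) :
    charFun (P.map (fun ω => U ω ⬝ᵥ N *ᵥ V ω)) t = ((1 / √(1 + t ^ 2 *
      (N 0 0 ^ 2 + N 0 1 ^ 2 + N 1 0 ^ 2 + N 1 1 ^ 2) + t ^ 4 * N.det ^ 2) : ℝ) : ℂ) := by
  have hpair := (indepFun_iff_map_prod_eq_prod_map_map hU.aemeasurable hV.aemeasurable).mp hUV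
  rw [hUlaw, hVlaw] at hpair
  have hm : Measurable (fun p : (Fin 2 → ℝ) × (Fin 2 → ℝ) => p.1 ⬝ᵥ N *ᵥ p.2) := by
    simp only [Matrix.mulVec, dotProduct, Fin.sum_univ_two]
    fun_prop
  have hmap : P.map (fun ω => U ω ⬝ᵥ N *ᵥ V ω) =
      ((stdGaussian (Fin 2)).prod (stdGaussian (Fin 2))).map (fun p => p.1 ⬝ᵥ N *ᵥ p.2) := by
    rw [← hpair, Measure.map_map hm (hU.prodMk hV)]
    rfl
  rw [hmap, charFun_apply_real, integral_map hm.aemeasurable (by fun_prop), integral_prod_symm]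
  · simp_rw [aux_std_char]
    rw [integral_complex_ofReal, aux_std_quad]
  · refine (integrable_const (1:ℝ)).mono' (Measurable.aestronglyMeasurable (by fun_prop))
      (ae_of_all _ fun x => ?_)
    rw [← Complex.ofReal_mul, Complex.norm_exp_ofReal_mul_I]

/-- Let `N` be a symmetric positive-definite `2×2` real matrix with
eigenvalues `0 < λ₁ ≤ λ₂` (equivalently: `tr N = λ₁ + λ₂` and `det N = λ₁λ₂`), and let
`U, V` be independent standard Gaussian random vectors on `ℝ²`.  Then the law of `U·NV`
has density `f(s) = (θ/2π) ∫_0^π √((1−ε²)/(1+ε cos φ)) e^{−θ|s|√(1+ε cos φ)} dφ`,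
where `ε = (λ₂² − λ₁²)/(λ₂² + λ₁²)` and `θ = (½(λ₁^{−2} + λ₂^{−2}))^{1/2}`. -/
theorem stmt_5 {Ω : Type*} [MeasurableSpace Ω] (P : Measure Ω) [IsProbabilityMeasure P]
    (N : Matrix (Fin 2) (Fin 2) ℝ) (hN : N.PosDef)
    (lam₁ lam₂ : ℝ) (hlam₁ : 0 < lam₁) (hlam₁₂ : lam₁ ≤ lam₂)
    (htr : N.trace = lam₁ + lam₂) (hdet : N.det = lam₁ * lam₂)
    (U V : Ω → (Fin 2 → ℝ)) (hU : Measurable U) (hV : Measurable V)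
    (hUlaw : P.map U = stdGaussian (Fin 2)) (hVlaw : P.map V = stdGaussian (Fin 2))
    (hUV : IndepFun U V P) :
    let ε : ℝ := (lam₂ ^ 2 - lam₁ ^ 2) / (lam₂ ^ 2 + lam₁ ^ 2)
    let θ : ℝ := Real.sqrt ((1 / 2) * (lam₁⁻¹ ^ 2 + lam₂⁻¹ ^ 2))
    P.map (fun ω => U ω ⬝ᵥ N *ᵥ V ω) =
      (volume : Measure ℝ).withDensity (fun s => ENNReal.ofReal
        ((θ / (2 * π)) * ∫ φ in (0 : ℝ)..π,
          Real.sqrt ((1 - ε ^ 2) / (1 + ε * Real.cos φ)) *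
            Real.exp (-θ * |s| * Real.sqrt (1 + ε * Real.cos φ)))) := by
  intro ε θ
  have hlam₂ : 0 < lam₂ := by linarith
  have hθ : 0 < θ := Real.sqrt_pos.mpr (by positivity)
  have hθ2 : θ ^ 2 = (1 / 2) * (lam₁⁻¹ ^ 2 + lam₂⁻¹ ^ 2) := Real.sq_sqrt (by positivity)
  have h0 : 0 ≤ ε := div_nonneg (by nlinarith) (by positivity)
  have h1 : ε < 1 := by
    rw [div_lt_one (by positivity)]; nlinarith [pow_pos hlam₁ 2]
  have hfin := isFiniteMeasure_withDensity_ofReal (aux_rhs_int θ ε hθ h0 h1).2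
  have : IsProbabilityMeasure (P.map (fun ω => U ω ⬝ᵥ N *ᵥ V ω)) := by
    apply Measure.isProbabilityMeasure_map
    apply Measurable.aemeasurable
    simp only [Matrix.mulVec, dotProduct, Fin.sum_univ_two]
    fun_prop
  apply Measure.ext_of_charFun
  ext t
  rw [aux_charFun_lhs P N U V hU hV hUlaw hVlaw hUV, aux_charFun_rhs θ ε t hθ h0 h1]
  congr 1
  have hsym : N 1 0 = N 0 1 := by simpa using hN.isHermitian.apply 0 1
  have hfrob : N 0 0 ^ 2 + N 0 1 ^ 2 + N 1 0 ^ 2 + N 1 1 ^ 2 = lam₁ ^ 2 + lam₂ ^ 2 := by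
    rw [Matrix.trace_fin_two] at htr
    rw [Matrix.det_fin_two] at hdet
    rw [hsym] at hdet ⊢
    linear_combination (N 0 0 + N 1 1 + lam₁ + lam₂) * htr - 2 * hdet
  rw [hfrob, hdet]
  have hε : 1 - ε ^ 2 = (2 * lam₁ * lam₂ / (lam₂ ^ 2 + lam₁ ^ 2)) ^ 2 := by
    simp only [ε]; field_simp; ring
  have hs : √(1 - ε ^ 2) = 2 * lam₁ * lam₂ / (lam₂ ^ 2 + lam₁ ^ 2) := by
    rw [hε, Real.sqrt_sq (by positivity)]
  have hc : θ ^ 2 * √(1 - ε ^ 2) = 1 / (lam₁ * lam₂) := by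
    rw [hs, hθ2]; field_simp
  have hθε : θ ^ 2 * ε = (1 / 2) * (lam₁⁻¹ ^ 2 - lam₂⁻¹ ^ 2) := by
    rw [hθ2]; simp only [ε]; field_simp
  have hD : (θ ^ 2 + t ^ 2) ^ 2 - (θ ^ 2 * ε) ^ 2 =
      (1 + t ^ 2 * (lam₁ ^ 2 + lam₂ ^ 2) + t ^ 4 * (lam₁ * lam₂) ^ 2) / (lam₁ * lam₂) ^ 2 := by
    rw [hθε, hθ2]; field_simp; ring
  rw [hc, hD, Real.sqrt_div (by positivity), Real.sqrt_sq (by positivity)]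
  field_simp
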